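/- Let m and f be positive integers with f > 1. If there exists a set of m points in general position in the plane whose maximum crossing family has size f (that is, it contains a crossing family of size f and every crossing family in it has size at most f), then for every positive integer n there exists a set of n points in general position in the plane in which every crossing family has size at most f·⌈n/m⌉. -/

import Mathlib

open Set

abbrev Pt : Type := ℝ × ℝ

/-- Signed area determinant of the triple `(p, q, r)`: positive iff `r` lies strictly to the
left of the directed line from `p` to `q`. -/
def det2 (p q r : Pt) : ℝ :=
  (q.1 - p.1) * (r.2 - p.2) - (q.2 - p.2) * (r.1 - p.1)

/-- `P` is in general position: no three distinct points of `P` are collinear. -/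
def GenPos (P : Set Pt) : Prop :=
  ∀ p ∈ P, ∀ q ∈ P, ∀ r ∈ P, p ≠ q → p ≠ r → q ≠ r →
    ¬ Collinear ℝ ({p, q, r} : Set Pt)

/-- The open segment (relative interior) of an unordered pair of points. -/
def segOpen : Sym2 Pt → Set Pt :=
  Sym2.lift ⟨fun p q => openSegment ℝ p q, fun p q => openSegment_symm ℝ p q⟩

/-- `F` is a crossing family in `P`: a finite set of segments, each joining two distinct
points of `P`, such that every two distinct segments have internally intersecting
open segments. -/
def IsCrossingFamily (P : Set Pt) (F : Finset (Sym2 Pt)) : Prop :=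
  (∀ s ∈ F, ¬ s.IsDiag ∧ ∀ x ∈ s, x ∈ P) ∧
  (∀ s ∈ F, ∀ t ∈ F, s ≠ t → (segOpen s ∩ segOpen t).Nonempty)

/-- A family of segments emanates from `X` if every segment has an endpoint in `X`. -/
def EmanatesFrom (F : Finset (Sym2 Pt)) (X : Set Pt) : Prop :=
  ∀ s ∈ F, ∃ x ∈ s, x ∈ X

/-!
Replace every point `p` of `P` by a cluster of `k` points on a tiny arc through `p`, all arcs being
nearly parallel to a common direction that no line through two points of `P` has. A crossing family
with a segment inside one cluster consists of segments that all have an endpoint in that cluster,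
so it has at most `k` members. Otherwise direct every segment from its lower to its upper cluster,
heights being measured transversally to the common direction: two crossing segments cannot meet a
cluster from opposite sides, so no cluster is both a lower and an upper end. The family is then a
bipartite multigraph on the clusters of maximum degree at most `k`, and by König's theorem it
contains a matching of at least a `1 / k` fraction of its segments. Segments of a matching cross
exactly when the corresponding segments of `P` do.
-/

open Filter Function SignType Topology

section Matching

theorem exists_partial_transversal_add_card_le {ι α : Type*} [Fintype ι] [DecidableEq α]
    (t : ι → Finset α) :
    ∃ (S T : Finset ι) (g : S → α), Injective g ∧ (∀ i : S, g i ∈ t i) ∧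
      Fintype.card ι + (T.biUnion t).card ≤ S.card + T.card := by
  classical
  obtain ⟨T, -, hT⟩ := (Finset.univ : Finset (Finset ι)).exists_max_image
    (fun T ↦ (T.card : ℤ) - (T.biUnion t).card) Finset.univ_nonempty
  have hTd : (T.biUnion t).card ≤ T.card := by simpa using hT ∅ (Finset.mem_univ _)
  set d := T.card - (T.biUnion t).card
  -- With `d` jokers added to every `t i`, Hall's condition holds.
  have hall (S : Finset ι) :
      S.card ≤ (S.biUnion fun i ↦ (t i).disjSum (Finset.univ : Finset (Fin d))).card := by
    rcases S.eq_empty_or_nonempty with rfl | hS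
    · simp
    have hunion : (S.biUnion fun i ↦ (t i).disjSum (Finset.univ : Finset (Fin d))) =
        (S.biUnion t).disjSum Finset.univ := by
      ext (a | j) <;> simp [hS.exists_mem]
    have := hT S (Finset.mem_univ _)
    rw [hunion, Finset.card_disjSum, Finset.card_univ, Fintype.card_fin]
    omega
  obtain ⟨g, hg, hgt⟩ := (Finset.all_card_le_biUnion_card_iff_exists_injective _).1 hall
  let S : Finset ι := {i | (g i).isLeft}
  have hS (i : S) : (g i).isLeft := (Finset.mem_filter.1 i.2).2
  refine ⟨S, T, fun i : S ↦ (g i).getLeft (hS i), fun i j hij ↦ ?_, fun i ↦ ?_, ?_⟩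
  · rw [Sum.getLeft_eq_iff, Sum.inl_getLeft] at hij
    exact Subtype.ext (hg hij)
  · have := hgt i
    rwa [← Sum.inl_getLeft (g i) (hS i), Finset.inl_mem_disjSum] at this
  · have hjokers : (Sᶜ.map ⟨g, hg⟩).card ≤ d := by
      refine (Finset.card_le_card (t := Finset.univ.map Embedding.inr) ?_).trans_eq (by simp)
      intro x hx
      obtain ⟨i, hi, rfl⟩ := Finset.mem_map.1 hx
      cases hgi : g i <;> simp_all [S]
    rw [Finset.card_map, Finset.card_compl] at hjokers
    omega

theorem exists_matching_card_le_mul {E α β : Type*} [Finite α] [DecidableEq α] [DecidableEq β]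
    (F : Finset E) (a : E → α) (b : E → β) (k : ℕ)
    (ha : ∀ x, (F.filter (a · = x)).card ≤ k) (hb : ∀ y, (F.filter (b · = y)).card ≤ k) :
    ∃ M ⊆ F, InjOn a M ∧ InjOn b M ∧ F.card ≤ k * M.card := by
  classical
  cases nonempty_fintype α
  obtain ⟨S, T, g, hg, hgt, hcard⟩ :=
    exists_partial_transversal_add_card_le fun x ↦ (F.filter (a · = x)).image b
  set N := T.biUnion fun x ↦ (F.filter (a · = x)).image b
  simp only [Finset.mem_image, Finset.mem_filter] at hgt
  choose e he using hgt
  have ha_e (x : S) : a (e x) = x := (he x).1.2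
  have hb_e (x : S) : b (e x) = g x := (he x).2
  have ha_inj : Injective (a ∘ e) := fun x y hxy ↦ Subtype.ext (by simpa [ha_e] using hxy)
  have hb_inj : Injective (b ∘ e) := fun x y hxy ↦ hg (by simpa [hb_e] using hxy)
  -- `Tᶜ` and `N` together form a vertex cover.
  have hfst : (F.filter (a · ∈ T)).card ≤ k * N.card := by
    refine Finset.card_le_mul_card_image_of_maps_to (f := b) (fun s hs ↦ ?_) k fun y _ ↦ ?_
    · obtain ⟨hsF, hsT⟩ := Finset.mem_filter.1 hs
      exact Finset.mem_biUnion.2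
        ⟨a s, hsT, Finset.mem_image_of_mem b (Finset.mem_filter.2 ⟨hsF, rfl⟩)⟩
    · exact (Finset.card_le_card (Finset.filter_subset_filter _ (Finset.filter_subset _ _))).trans
        (hb y)
  have hsnd : (F.filter (a · ∉ T)).card ≤ k * Tᶜ.card := by
    refine Finset.card_le_mul_card_image_of_maps_to (f := a) (fun s hs ↦ ?_) k fun x _ ↦ ?_
    · exact Finset.mem_compl.2 (Finset.mem_filter.1 hs).2
    · exact (Finset.card_le_card (Finset.filter_subset_filter _ (Finset.filter_subset _ _))).trans
        (ha x)
  refine ⟨Finset.univ.image e, ?_, ?_, ?_, ?_⟩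
  · exact Finset.image_subset_iff.2 fun x _ ↦ (he x).1.1
  · simpa using ha_inj.injOn_range
  · simpa using hb_inj.injOn_range
  · rw [Finset.card_image_of_injective _ ha_inj.of_comp, Finset.card_univ, Fintype.card_coe]
    calc F.card
        = (F.filter (a · ∈ T)).card + (F.filter (a · ∉ T)).card :=
          (Finset.card_filter_add_card_filter_not _).symm
      _ ≤ k * (N.card + Tᶜ.card) := by rw [mul_add]; exact add_le_add hfst hsnd
      _ ≤ k * S.card := Nat.mul_le_mul_left k (by have := Finset.card_add_card_compl T; omega)

end Matching

section Orientation

theorem det2_swap (p q r : Pt) : det2 q p r = -det2 p q r := by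
  unfold det2; ring

theorem det2_rotate (p q r : Pt) : det2 q r p = det2 p q r := by
  unfold det2; ring

theorem det2_self_right (p q : Pt) : det2 p q q = 0 := by
  unfold det2; ring

theorem det2_self_left (p q : Pt) : det2 p q p = 0 := by
  unfold det2; ring

theorem det2_smul_add_smul (a b c d : Pt) {u v : ℝ} (huv : u + v = 1) :
    det2 a b (u • c + v • d) = u * det2 a b c + v * det2 a b d := by
  obtain rfl : u = 1 - v := by linarith
  simp only [det2, Prod.fst_add, Prod.snd_add, Prod.smul_fst, Prod.smul_snd, smul_eq_mul]
  ring

theorem collinear_iff_det2_eq_zero (p q r : Pt) :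
    Collinear ℝ ({p, q, r} : Set Pt) ↔ det2 p q r = 0 := by
  rw [collinear_iff_of_mem (mem_insert p _)]
  simp only [forall_mem_insert, mem_singleton_iff, forall_eq, vadd_eq_add]
  constructor
  · rintro ⟨v, -, ⟨x, rfl⟩, y, rfl⟩
    simp only [det2, Prod.fst_add, Prod.snd_add, Prod.smul_fst, Prod.smul_snd, smul_eq_mul]
    ring
  intro hdet
  rcases eq_or_ne q p with rfl | hqp
  · exact ⟨r - q, ⟨0, by simp⟩, ⟨0, by simp⟩, 1, by simp⟩
  have hnorm : (q.1 - p.1) ^ 2 + (q.2 - p.2) ^ 2 ≠ 0 := by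
    contrapose! hqp
    exact Prod.ext (by nlinarith) (by nlinarith)
  unfold det2 at hdet
  refine ⟨q - p, ⟨0, by simp⟩, ⟨1, by simp⟩, ((q.1 - p.1) * (r.1 - p.1) +
    (q.2 - p.2) * (r.2 - p.2)) / ((q.1 - p.1) ^ 2 + (q.2 - p.2) ^ 2), Prod.ext ?_ ?_⟩
  · simp only [Prod.fst_add, Prod.smul_fst, Prod.fst_sub, smul_eq_mul]
    field_simp
    linear_combination (-(q.2 - p.2)) * hdet
  · simp only [Prod.snd_add, Prod.smul_snd, Prod.snd_sub, smul_eq_mul]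
    field_simp
    linear_combination (q.1 - p.1) * hdet

theorem GenPos.mono {P Q : Set Pt} (hQ : GenPos Q) (hPQ : P ⊆ Q) : GenPos P :=
  fun p hp q hq r hr ↦ hQ p (hPQ hp) q (hPQ hq) r (hPQ hr)

theorem GenPos.det2_ne_zero {P : Set Pt} (hP : GenPos P) {p q r : Pt} (hp : p ∈ P) (hq : q ∈ P)
    (hr : r ∈ P) (hpq : p ≠ q) (hpr : p ≠ r) (hqr : q ≠ r) : det2 p q r ≠ 0 :=
  (collinear_iff_det2_eq_zero p q r).not.1 (hP p hp q hq r hr hpq hpr hqr)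

end Orientation

section Crossing

variable {a b c d : Pt}

theorem sign_det2_eq_neg_of_crossing
    (hcross : (openSegment ℝ a b ∩ openSegment ℝ c d).Nonempty) :
    sign (det2 a b d) = -sign (det2 a b c) := by
  obtain ⟨_, ⟨u, v, -, -, huv, rfl⟩, x, y, hx, hy, hxy, heq⟩ := hcross
  have hdet : y * det2 a b d = -(x * det2 a b c) := by
    have := congrArg (det2 a b) heq
    rw [det2_smul_add_smul _ _ _ _ hxy, det2_smul_add_smul _ _ _ _ huv, det2_self_left,
      det2_self_right] at this
    linarith
  simpa [sign_mul, Left.sign_neg, hx, hy] using congrArg sign hdet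

theorem sign_det2_eq_of_crossing (hcross : (openSegment ℝ a b ∩ openSegment ℝ c d).Nonempty) :
    sign (det2 a c b) = sign (det2 a c d) := by
  obtain ⟨_, ⟨u, v, -, hv, huv, rfl⟩, x, y, -, hy, hxy, heq⟩ := hcross
  have hdet : v * det2 a c b = y * det2 a c d := by
    have := congrArg (det2 a c) heq
    rw [det2_smul_add_smul _ _ _ _ hxy, det2_smul_add_smul _ _ _ _ huv, det2_self_left,
      det2_self_right] at this
    linarith
  simpa [sign_mul, hv, hy] using congrArg sign hdet

theorem det2_eq_zero_of_crossing (hcross : (openSegment ℝ a b ∩ openSegment ℝ a c).Nonempty) :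
    det2 a b c = 0 := by
  simpa [det2_self_left] using sign_det2_eq_neg_of_crossing hcross

theorem div_sub_pos_of_sign_eq_neg {x y : ℝ} (hx : x ≠ 0) (hxy : sign y = -sign x) :
    0 < x / (x - y) ∧ 0 < -y / (x - y) := by
  rcases hx.lt_or_gt with hx | hx
  · have hy : 0 < y := by simpa [hx, sign_eq_one_iff] using hxy
    exact ⟨div_pos_of_neg_of_neg hx (by linarith),
      div_pos_of_neg_of_neg (by linarith) (by linarith)⟩
  · have hy : y < 0 := by simpa [hx, sign_eq_neg_one_iff] using hxy
    exact ⟨div_pos hx (by linarith), div_pos (by linarith) (by linarith)⟩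

theorem crossing_iff_sign_det2 (hc : det2 a b c ≠ 0) (ha : det2 c d a ≠ 0) :
    (openSegment ℝ a b ∩ openSegment ℝ c d).Nonempty ↔
      sign (det2 a b d) = -sign (det2 a b c) ∧ sign (det2 c d b) = -sign (det2 c d a) := by
  refine ⟨fun h ↦ ⟨sign_det2_eq_neg_of_crossing h,
    sign_det2_eq_neg_of_crossing (inter_comm _ _ ▸ h)⟩, fun ⟨hcd, hab⟩ ↦ ?_⟩
  obtain ⟨hd_pos, hc_pos⟩ := div_sub_pos_of_sign_eq_neg hc hcd
  obtain ⟨hb_pos, ha_pos⟩ := div_sub_pos_of_sign_eq_neg ha hab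
  have hcd_ne : det2 a b c - det2 a b d ≠ 0 := fun h ↦ by simp [h] at hd_pos
  have hab_ne : det2 c d a - det2 c d b ≠ 0 := fun h ↦ by simp [h] at hb_pos
  refine ⟨_, ⟨_, _, ha_pos, hb_pos, by field_simp; ring, rfl⟩,
    ⟨_, _, hc_pos, hd_pos, by field_simp; ring, Prod.ext ?_ ?_⟩⟩
  all_goals
    simp only [Prod.fst_add, Prod.snd_add, Prod.smul_fst, Prod.smul_snd, smul_eq_mul]
    field_simp
    unfold det2
    ring

end Crossing

namespace IsCrossingFamily

variable {P Q : Set Pt} {F G : Finset (Sym2 Pt)}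

theorem mono (hF : IsCrossingFamily P F) (hPQ : P ⊆ Q) : IsCrossingFamily Q F :=
  ⟨fun S hS ↦ ⟨(hF.1 S hS).1, fun x hx ↦ hPQ ((hF.1 S hS).2 x hx)⟩, hF.2⟩

theorem subset (hF : IsCrossingFamily P F) (hGF : G ⊆ F) : IsCrossingFamily P G :=
  ⟨fun S hS ↦ hF.1 S (hGF hS), fun S hS T hT ↦ hF.2 S (hGF hS) T (hGF hT)⟩

theorem eq_of_mem_of_mem (hF : IsCrossingFamily P F) (hP : GenPos P) {S T : Sym2 Pt}
    (hS : S ∈ F) (hT : T ∈ F) {x : Pt} (hxS : x ∈ S) (hxT : x ∈ T) : S = T := by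
  by_contra hST
  have hmemS := (hF.1 S hS).2
  have hmemT := (hF.1 T hT).2
  obtain ⟨y, rfl⟩ := Sym2.mem_iff_exists.1 hxS
  obtain ⟨z, rfl⟩ := Sym2.mem_iff_exists.1 hxT
  have hxy : x ≠ y := (hF.1 _ hS).1
  have hxz : x ≠ z := (hF.1 _ hT).1
  have hyz : y ≠ z := fun hyz ↦ hST (hyz ▸ rfl)
  exact hP.det2_ne_zero (hmemS x hxS) (hmemS y (Sym2.mem_mk_right x y))
    (hmemT z (Sym2.mem_mk_right x z)) hxy hxz hyz (det2_eq_zero_of_crossing (hF.2 _ hS _ hT hST))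

theorem card_le_of_emanatesFrom (hF : IsCrossingFamily P F) (hP : GenPos P) {X : Finset Pt}
    (hX : EmanatesFrom F ↑X) : F.card ≤ X.card := by
  choose! x hxS hxX using hX
  exact Finset.card_le_card_of_injOn x hxX fun S hS T hT hST ↦
    hF.eq_of_mem_of_mem hP hS hT (hxS S hS) (hST ▸ hxS T hT)

end IsCrossingFamily

section BlowUp

/-- `c` replaces each point `p` of `P` by a cluster `c p` in general position, indexed by `ι`.
Three points of distinct clusters are oriented like the points they replace, and the line through
two points of the cluster of `p` separates the clusters of greater `height` than `p` from those of
smaller `height`. -/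
structure IsBlowUp {P : Set Pt} {ι : Type*} [LinearOrder ι] (height : P → ℝ) (c : P → ι → Pt) :
    Prop where
  injective2 : Injective2 c
  height_injective : Injective height
  genPos_cluster (p : P) : GenPos (range (c p))
  sign_det2 {p q r : P} (i j l : ι) : p ≠ q → p ≠ r → q ≠ r →
    sign (det2 (c p i) (c q j) (c r l)) = sign (det2 p q r)
  sign_det2_cluster {p q : P} {i j : ι} (l : ι) : p ≠ q → i < j →
    sign (det2 (c p i) (c p j) (c q l)) = sign (height q - height p)

/-- The segment `S` joins a point of the cluster of `p` to one of the cluster of `q`; for `p = q`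
it lies inside a single cluster. -/
def JoinsClusters {P : Set Pt} {ι : Type*} (c : P → ι → Pt) (S : Sym2 Pt) (p q : P) : Prop :=
  ∃ i j, S = s(c p i, c q j)

section JoinsClusters

variable {P : Set Pt} {ι : Type*} {c : P → ι → Pt} {p q : P} {S : Sym2 Pt}

theorem JoinsClusters.symm (hS : JoinsClusters c S p q) : JoinsClusters c S q p := by
  obtain ⟨i, j, rfl⟩ := hS
  exact ⟨j, i, Sym2.eq_swap⟩

theorem JoinsClusters.exists_mem (hS : JoinsClusters c S p q) : ∃ i, c p i ∈ S := by
  obtain ⟨i, j, rfl⟩ := hS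
  exact ⟨i, Sym2.mem_mk_left _ _⟩

theorem IsCrossingFamily.exists_joinsClusters {F : Finset (Sym2 Pt)}
    (hF : IsCrossingFamily (range (uncurry c)) F) (hS : S ∈ F) :
    ∃ p q, JoinsClusters c S p q := by
  have hmem := (hF.1 S hS).2
  induction S with
  | _ x y =>
    obtain ⟨⟨p, i⟩, rfl⟩ := hmem x (Sym2.mem_mk_left x y)
    obtain ⟨⟨q, j⟩, rfl⟩ := hmem y (Sym2.mem_mk_right _ y)
    exact ⟨p, q, i, j, rfl⟩

end JoinsClusters

namespace IsBlowUp

variable {P : Set Pt} {ι : Type*} [LinearOrder ι] {height : P → ℝ} {c : P → ι → Pt}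
  {p q r t : P} {i j : ι} {F : Finset (Sym2 Pt)}

theorem det2_ne_zero (hc : IsBlowUp height c) (hP : GenPos P) (i j l : ι)
    (hpq : p ≠ q) (hpr : p ≠ r) (hqr : q ≠ r) : det2 (c p i) (c q j) (c r l) ≠ 0 := by
  rw [← sign_ne_zero, hc.sign_det2 i j l hpq hpr hqr, sign_ne_zero]
  exact hP.det2_ne_zero p.2 q.2 r.2 (Subtype.coe_ne_coe.2 hpq) (Subtype.coe_ne_coe.2 hpr)
    (Subtype.coe_ne_coe.2 hqr)

theorem sign_det2_cluster_eq_iff (hc : IsBlowUp height c) (hpq : p ≠ q) (hpr : p ≠ r)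
    (hij : i ≠ j) (l l' : ι) :
    sign (det2 (c p i) (c p j) (c q l)) = sign (det2 (c p i) (c p j) (c r l')) ↔
      sign (height q - height p) = sign (height r - height p) := by
  rcases hij.lt_or_gt with hij | hij
  · rw [hc.sign_det2_cluster l hpq hij, hc.sign_det2_cluster l' hpr hij]
  · rw [det2_swap (c p j), det2_swap (c p j), Left.sign_neg, Left.sign_neg, neg_inj,
      hc.sign_det2_cluster l hpq hij, hc.sign_det2_cluster l' hpr hij]

theorem det2_cluster_ne_zero (hc : IsBlowUp height c) (hpq : p ≠ q) (hij : i ≠ j) (l : ι) :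
    det2 (c p i) (c p j) (c q l) ≠ 0 := by
  have hlt {i j : ι} (hij : i < j) : det2 (c p i) (c p j) (c q l) ≠ 0 := by
    rw [← sign_ne_zero, hc.sign_det2_cluster l hpq hij, sign_ne_zero]
    exact sub_ne_zero.2 (hc.height_injective.ne hpq.symm)
  rcases hij.lt_or_gt with hij | hij
  · exact hlt hij
  · exact det2_swap (c p j) (c p i) _ ▸ neg_ne_zero.2 (hlt hij)

theorem genPos (hc : IsBlowUp height c) (hP : GenPos P) : GenPos (range (uncurry c)) := by
  rintro _ ⟨⟨p, i⟩, rfl⟩ _ ⟨⟨q, j⟩, rfl⟩ _ ⟨⟨r, l⟩, rfl⟩ hx hy hz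
  simp only [uncurry_apply_pair] at hx hy hz ⊢
  by_cases hpq : p = q
  · subst hpq
    by_cases hpr : p = r
    · subst hpr
      exact hc.genPos_cluster p _ ⟨i, rfl⟩ _ ⟨j, rfl⟩ _ ⟨l, rfl⟩ hx hy hz
    rw [collinear_iff_det2_eq_zero]
    exact hc.det2_cluster_ne_zero hpr (by rintro rfl; exact hx rfl) l
  rw [collinear_iff_det2_eq_zero]
  by_cases hpr : p = r
  · subst hpr
    rw [← det2_rotate, ← det2_rotate]
    exact hc.det2_cluster_ne_zero hpq (by rintro rfl; exact hy rfl) j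
  by_cases hqr : q = r
  · subst hqr
    rw [← det2_rotate]
    exact hc.det2_cluster_ne_zero (Ne.symm hpq) (by rintro rfl; exact hz rfl) i
  exact hc.det2_ne_zero hP i j l hpq hpr hqr

theorem crossing_iff (hc : IsBlowUp height c) (hP : GenPos P) (i j l o : ι) (hpq : p ≠ q)
    (hpr : p ≠ r) (hpt : p ≠ t) (hqr : q ≠ r) (hqt : q ≠ t) (hrt : r ≠ t) :
    (openSegment ℝ (c p i) (c q j) ∩ openSegment ℝ (c r l) (c t o)).Nonempty ↔
      (openSegment ℝ (p : Pt) q ∩ openSegment ℝ (r : Pt) t).Nonempty := by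
  have hval {x y : P} (h : x ≠ y) : (x : Pt) ≠ y := Subtype.coe_ne_coe.2 h
  rw [crossing_iff_sign_det2 (hc.det2_ne_zero hP i j l hpq hpr hqr)
      (hc.det2_ne_zero hP l o i hrt hpr.symm hpt.symm),
    crossing_iff_sign_det2
      (hP.det2_ne_zero p.2 q.2 r.2 (hval hpq) (hval hpr) (hval hqr))
      (hP.det2_ne_zero r.2 t.2 p.2 (hval hrt) (hval hpr.symm) (hval hpt.symm)),
    hc.sign_det2 i j l hpq hpr hqr, hc.sign_det2 i j o hpq hpt hqt,
    hc.sign_det2 l o i hrt hpr.symm hpt.symm, hc.sign_det2 l o j hrt hqr.symm hqt.symm]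

theorem not_crossing_of_height_lt_of_height_lt (hc : IsBlowUp height c) (hP : GenPos P)
    (i j l o : ι) (hpq : height p < height q) (hqr : height q < height r) :
    ¬(openSegment ℝ (c q i) (c r j) ∩ openSegment ℝ (c q l) (c p o)).Nonempty := by
  intro hcross
  have hqp_ne : q ≠ p := fun h ↦ hpq.ne (congrArg height h.symm)
  have hqr_ne : q ≠ r := fun h ↦ hqr.ne (congrArg height h)
  have hrp_ne : r ≠ p := fun h ↦ (hpq.trans hqr).ne (congrArg height h.symm)
  rcases eq_or_ne i l with rfl | hil
  · exact hc.det2_ne_zero hP i j o hqr_ne hqp_ne hrp_ne (det2_eq_zero_of_crossing hcross)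
  · have hsides := (hc.sign_det2_cluster_eq_iff hqr_ne hqp_ne hil j o).1
      (sign_det2_eq_of_crossing hcross)
    rw [sign_pos (sub_pos.2 hqr), sign_neg (sub_neg.2 hpq)] at hsides
    exact absurd hsides (by decide)

theorem emanatesFrom_cluster_of_joinsClusters_self (hc : IsBlowUp height c) (hP : GenPos P)
    (hF : IsCrossingFamily (range (uncurry c)) F) {S : Sym2 Pt} (hS : S ∈ F)
    (hSp : JoinsClusters c S p p) : EmanatesFrom F (range (c p)) := by
  obtain ⟨i, j, rfl⟩ := hSp
  have hij : i ≠ j := by rintro rfl; exact (hF.1 _ hS).1 rfl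
  intro T hT
  obtain ⟨q, r, l, o, rfl⟩ := hF.exists_joinsClusters hT
  by_contra! hmiss
  have hpq : p ≠ q := by rintro rfl; exact hmiss _ (Sym2.mem_mk_left _ _) ⟨l, rfl⟩
  have hpr : p ≠ r := by rintro rfl; exact hmiss _ (Sym2.mem_mk_right _ _) ⟨o, rfl⟩
  have hST : s(c p i, c p j) ≠ s(c q l, c r o) := fun h ↦
    hmiss (c p i) (h ▸ Sym2.mem_mk_left _ _) ⟨i, rfl⟩
  rcases eq_or_ne q r with rfl | hqr
  · have hopp := sign_det2_eq_neg_of_crossing (hF.2 _ hS _ hT hST)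
    rw [(hc.sign_det2_cluster_eq_iff hpq hpq hij o l).2 rfl, self_eq_neg_iff,
      sign_eq_zero_iff] at hopp
    exact hc.det2_cluster_ne_zero hpq hij l hopp
  · have hopp := sign_det2_eq_neg_of_crossing (hF.2 _ hT _ hS hST.symm)
    rw [hc.sign_det2 l o j hqr hpq.symm hpr.symm, ← hc.sign_det2 l o i hqr hpq.symm hpr.symm,
      self_eq_neg_iff, sign_eq_zero_iff] at hopp
    exact hc.det2_ne_zero hP l o i hqr hpq.symm hpr.symm hopp

theorem card_le_card_of_emanatesFrom_cluster [Fintype ι] (hc : IsBlowUp height c) (hP : GenPos P)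
    (hF : IsCrossingFamily (range (uncurry c)) F) (hFp : EmanatesFrom F (range (c p))) :
    F.card ≤ Fintype.card ι := by
  classical
  calc F.card ≤ (Finset.univ.image (c p)).card :=
        hF.card_le_of_emanatesFrom (hc.genPos hP) (by simpa using hFp)
    _ ≤ Fintype.card ι := Finset.card_image_le

theorem card_filter_le_card [Fintype ι] [DecidableEq P] (hc : IsBlowUp height c) (hP : GenPos P)
    (hF : IsCrossingFamily (range (uncurry c)) F) {g : Sym2 Pt → P}
    (hg : ∀ S ∈ F, ∃ i, c (g S) i ∈ S) (p : P) :
    (F.filter (g · = p)).card ≤ Fintype.card ι := by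
  refine hc.card_le_card_of_emanatesFrom_cluster (p := p) hP
    (hF.subset (Finset.filter_subset _ _)) fun S hS ↦ ?_
  obtain ⟨hSF, rfl⟩ := Finset.mem_filter.1 hS
  obtain ⟨i, hi⟩ := hg S hSF
  exact ⟨_, hi, i, rfl⟩

theorem exists_lower_upper (hc : IsBlowUp height c)
    (hF : IsCrossingFamily (range (uncurry c)) F)
    (hinner : ∀ S ∈ F, ∀ p, ¬JoinsClusters c S p p) {S : Sym2 Pt} (hS : S ∈ F) :
    ∃ p q, height p < height q ∧ JoinsClusters c S p q := by
  obtain ⟨p, q, hSpq⟩ := hF.exists_joinsClusters hS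
  have hpq : p ≠ q := by rintro rfl; exact hinner S hS p hSpq
  rcases (hc.height_injective.ne hpq).lt_or_gt with hlt | hlt
  · exact ⟨p, q, hlt, hSpq⟩
  · exact ⟨q, p, hlt, hSpq.symm⟩

theorem lower_ne_upper (hc : IsBlowUp height c) (hP : GenPos P)
    (hF : IsCrossingFamily (range (uncurry c)) F) {S T : Sym2 Pt} (hS : S ∈ F) (hT : T ∈ F)
    (hpq : height p < height q) (hSpq : JoinsClusters c S p q)
    (hrt : height r < height t) (hTrt : JoinsClusters c T r t) : p ≠ t := by
  rintro rfl
  obtain ⟨i, j, rfl⟩ := hSpq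
  obtain ⟨l, o, rfl⟩ := hTrt
  have hST : s(c p i, c q j) ≠ s(c r l, c p o) := by
    intro h
    rcases Sym2.eq_iff.1 h with ⟨h, -⟩ | ⟨-, h⟩
    · exact hrt.ne (congrArg height (hc.injective2 h).1.symm)
    · exact (hrt.trans hpq).ne (congrArg height (hc.injective2 h).1.symm)
  have hcross := hF.2 _ hS _ hT hST
  rw [Sym2.eq_swap (a := c r l)] at hcross
  exact hc.not_crossing_of_height_lt_of_height_lt hP i j o l hrt hpq hcross

theorem exists_isCrossingFamily_card_eq_of_injOn (hc : IsBlowUp height c) (hP : GenPos P)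
    (hF : IsCrossingFamily (range (uncurry c)) F) {lower upper : Sym2 Pt → P}
    (hlt : ∀ S ∈ F, height (lower S) < height (upper S))
    (hjoins : ∀ S ∈ F, JoinsClusters c S (lower S) (upper S))
    (hlower : InjOn lower F) (hupper : InjOn upper F) :
    ∃ G : Finset (Sym2 Pt), IsCrossingFamily P G ∧ G.card = F.card := by
  classical
  have hne {S T : Sym2 Pt} (hS : S ∈ F) (hT : T ∈ F) : lower S ≠ upper T :=
    hc.lower_ne_upper hP hF hS hT (hlt S hS) (hjoins S hS) (hlt T hT) (hjoins T hT)
  let project (S : Sym2 Pt) : Sym2 Pt := s((lower S : Pt), (upper S : Pt))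
  refine ⟨F.image project, ⟨fun S' hS' ↦ ?_, fun S' hS' T' hT' hST' ↦ ?_⟩,
    Finset.card_image_of_injOn fun S hS T hT hST ↦ ?_⟩
  · obtain ⟨S, hS, rfl⟩ := Finset.mem_image.1 hS'
    exact ⟨Subtype.coe_ne_coe.2 (hne hS hS), by simp [project]⟩
  · obtain ⟨S, hS, rfl⟩ := Finset.mem_image.1 hS'
    obtain ⟨T, hT, rfl⟩ := Finset.mem_image.1 hT'
    have hST : S ≠ T := fun h ↦ hST' (congrArg project h)
    obtain ⟨i, j, hSe⟩ := hjoins S hS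
    obtain ⟨l, o, hTe⟩ := hjoins T hT
    have hcross := hF.2 S hS T hT hST
    rw [hSe, hTe] at hcross
    exact (hc.crossing_iff hP i j l o (hne hS hS) (hlower.ne hS hT hST) (hne hS hT)
      (hne hT hS).symm (hupper.ne hS hT hST) (hne hT hT)).1 hcross
  · rcases Sym2.eq_iff.1 hST with ⟨h, -⟩ | ⟨h, -⟩
    · exact hlower hS hT (Subtype.ext h)
    · exact absurd (Subtype.ext h) (hne hS hT)

theorem exists_isCrossingFamily_card_le_mul [Finite P] [Fintype ι] (hc : IsBlowUp height c)
    (hP : GenPos P) (hF : IsCrossingFamily (range (uncurry c)) F)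
    (hinner : ∀ S ∈ F, ∀ p, ¬JoinsClusters c S p p) :
    ∃ G : Finset (Sym2 Pt), IsCrossingFamily P G ∧ F.card ≤ Fintype.card ι * G.card := by
  classical
  have hends : ∀ S ∈ F, ∃ p q, height p < height q ∧ JoinsClusters c S p q :=
    fun S hS ↦ hc.exists_lower_upper hF hinner hS
  rcases F.eq_empty_or_nonempty with rfl | ⟨S₀, hS₀⟩
  · exact ⟨∅, by simp [IsCrossingFamily], by simp⟩
  have : Nonempty P := ⟨(hends S₀ hS₀).choose⟩
  choose! lower upper hlt hjoins using hends
  obtain ⟨M, hMF, hM_lower, hM_upper, hcard⟩ := exists_matching_card_le_mul F lower upper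
    (Fintype.card ι) (hc.card_filter_le_card hP hF fun S hS ↦ (hjoins S hS).exists_mem)
    (hc.card_filter_le_card hP hF fun S hS ↦ (hjoins S hS).symm.exists_mem)
  obtain ⟨G, hG, hGM⟩ := hc.exists_isCrossingFamily_card_eq_of_injOn hP (hF.subset hMF)
    (fun S hS ↦ hlt S (hMF hS)) (fun S hS ↦ hjoins S (hMF hS)) hM_lower hM_upper
  exact ⟨G, hG, hGM ▸ hcard⟩

theorem card_le_mul [Finite P] [Fintype ι] (hc : IsBlowUp height c) (hP : GenPos P) {f : ℕ}
    (hf : 0 < f) (hmax : ∀ G : Finset (Sym2 Pt), IsCrossingFamily P G → G.card ≤ f)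
    (hF : IsCrossingFamily (range (uncurry c)) F) : F.card ≤ f * Fintype.card ι := by
  by_cases hinner : ∃ S ∈ F, ∃ p, JoinsClusters c S p p
  · obtain ⟨S, hS, p, hSp⟩ := hinner
    calc F.card ≤ Fintype.card ι := hc.card_le_card_of_emanatesFrom_cluster hP hF
          (hc.emanatesFrom_cluster_of_joinsClusters_self hP hF hS hSp)
      _ ≤ f * Fintype.card ι := Nat.le_mul_of_pos_left _ hf
  · push Not at hinner
    obtain ⟨G, hG, hFG⟩ := hc.exists_isCrossingFamily_card_le_mul hP hF hinner
    calc F.card ≤ Fintype.card ι * G.card := hFG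
      _ ≤ Fintype.card ι * f := Nat.mul_le_mul_left _ (hmax G hG)
      _ = f * Fintype.card ι := mul_comm _ _

end IsBlowUp

end BlowUp

section Construction

/-- The functional whose level lines have slope `s`. -/
def slopeHeight (s : ℝ) (p : Pt) : ℝ := p.2 - s * p.1

/-- The point with parameter `x` on a parabola through `p` with slope `s` at `p`; for
`x = 0, 1, …` and small `ε > 0` these form the cluster replacing `p`. -/
def clusterPoint (s ε : ℝ) (p : Pt) (x : ℝ) : Pt :=
  (p.1 + ε * x, p.2 + s * (ε * x) + (ε * x) ^ 2)

theorem eventually_cofinite_slopeHeight_ne {p q : Pt} (hpq : p ≠ q) :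
    ∀ᶠ s in cofinite, slopeHeight s p ≠ slopeHeight s q := by
  have hsub : {s | slopeHeight s p = slopeHeight s q}.Subsingleton := by
    intro s hs s' hs'
    simp only [slopeHeight, mem_ofPred_eq] at hs hs'
    have hfst : p.1 - q.1 ≠ 0 := fun h ↦ hpq (Prod.ext (by linarith) (by
      rw [sub_eq_zero.1 h] at hs; linarith))
    exact mul_right_cancel₀ hfst (by linarith)
  exact hsub.finite.compl_mem_cofinite

theorem exists_slopeHeight_injective (P : Set Pt) [Finite P] :
    ∃ s, Injective fun p : P ↦ slopeHeight s p := by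
  have hne : ∀ᶠ s in cofinite, ∀ p q : P, p ≠ q → slopeHeight s p ≠ slopeHeight s q := by
    simp only [eventually_all]
    exact fun p q hpq ↦ eventually_cofinite_slopeHeight_ne (Subtype.coe_ne_coe.2 hpq)
  obtain ⟨s, hs⟩ := hne.exists
  exact ⟨s, fun p q ↦ not_imp_not.1 (hs p q)⟩

theorem eventually_sign_eq {X : Type*} [TopologicalSpace X] {g : X → ℝ} {x : X}
    (hg : ContinuousAt g x) (hx : g x ≠ 0) : ∀ᶠ y in 𝓝 x, sign (g y) = sign (g x) :=
  ((continuousAt_sign_of_ne_zero hx).comp hg).eventually_mem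
    ((isOpen_discrete {sign (g x)}).mem_nhds rfl)

variable (s : ℝ)

theorem continuous_clusterPoint (p : Pt) (x : ℝ) : Continuous fun ε ↦ clusterPoint s ε p x := by
  unfold clusterPoint; fun_prop

theorem clusterPoint_zero (p : Pt) (x : ℝ) : clusterPoint s 0 p x = p := by
  simp [clusterPoint]

theorem clusterPoint_injective {ε : ℝ} (hε : ε ≠ 0) (p : Pt) :
    Injective (clusterPoint s ε p) := fun x y hxy ↦ by
  simpa [clusterPoint, hε] using congrArg Prod.fst hxy

theorem eventually_clusterPoint_ne {p q : Pt} (hpq : p ≠ q) (x y : ℝ) :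
    ∀ᶠ ε in 𝓝 0, clusterPoint s ε p x ≠ clusterPoint s ε q y :=
  (isOpen_ne_fun (continuous_clusterPoint s p x) (continuous_clusterPoint s q y)).mem_nhds
    (by simpa [clusterPoint_zero])

theorem genPos_range_clusterPoint {ε : ℝ} (hε : ε ≠ 0) (p : Pt) :
    GenPos (range (clusterPoint s ε p)) := by
  rintro _ ⟨x, rfl⟩ _ ⟨y, rfl⟩ _ ⟨z, rfl⟩ hxy hxz hyz
  have hdet : det2 (clusterPoint s ε p x) (clusterPoint s ε p y) (clusterPoint s ε p z) =
      ε ^ 3 * ((y - x) * (z - x) * (z - y)) := by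
    unfold det2 clusterPoint; ring
  have hsub {x y : ℝ} (h : clusterPoint s ε p x ≠ clusterPoint s ε p y) : y - x ≠ 0 :=
    sub_ne_zero.2 (ne_of_apply_ne _ h.symm)
  rw [collinear_iff_det2_eq_zero, hdet]
  exact mul_ne_zero (pow_ne_zero 3 hε)
    (mul_ne_zero (mul_ne_zero (hsub hxy) (hsub hxz)) (hsub hyz))

theorem eventually_sign_det2_clusterPoint {p q r : Pt} (hdet : det2 p q r ≠ 0) (x y z : ℝ) :
    ∀ᶠ ε in 𝓝 0, sign (det2 (clusterPoint s ε p x) (clusterPoint s ε q y)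
      (clusterPoint s ε r z)) = sign (det2 p q r) := by
  have hcont : Continuous fun ε ↦
      det2 (clusterPoint s ε p x) (clusterPoint s ε q y) (clusterPoint s ε r z) := by
    unfold det2 clusterPoint; fun_prop
  simpa only [clusterPoint_zero] using
    eventually_sign_eq (x := 0) hcont.continuousAt (by simpa only [clusterPoint_zero])

theorem eventually_sign_det2_clusterPoint_same {p q : Pt}
    (hheight : slopeHeight s p ≠ slopeHeight s q) {x y : ℝ} (hxy : x < y) (z : ℝ) :
    ∀ᶠ ε in 𝓝[>] 0, sign (det2 (clusterPoint s ε p x) (clusterPoint s ε p y)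
      (clusterPoint s ε q z)) = sign (slopeHeight s q - slopeHeight s p) := by
  -- `s + ε * (x + y)` is the slope of the chord between the parameters `x` and `y`.
  let above (ε : ℝ) : ℝ := slopeHeight (s + ε * (x + y)) (clusterPoint s ε q z) -
    slopeHeight (s + ε * (x + y)) (clusterPoint s ε p x)
  have hdet (ε : ℝ) : det2 (clusterPoint s ε p x) (clusterPoint s ε p y) (clusterPoint s ε q z) =
      ε * (y - x) * above ε := by
    simp only [det2, above, slopeHeight, clusterPoint]; ring
  have habove_zero : above 0 = slopeHeight s q - slopeHeight s p := by
    simp [above, clusterPoint_zero]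
  have hcont : Continuous above := by
    unfold above slopeHeight clusterPoint; fun_prop
  have hsign := eventually_sign_eq (x := 0) hcont.continuousAt
    (habove_zero ▸ sub_ne_zero.2 hheight.symm)
  filter_upwards [nhdsWithin_le_nhds hsign, self_mem_nhdsWithin] with ε hε hε_pos
  rw [hdet, sign_mul, sign_pos (mul_pos hε_pos (sub_pos.2 hxy)), one_mul, hε, habove_zero]

theorem exists_isBlowUp {P : Set Pt} [Finite P] (hP : GenPos P) (k : ℕ) :
    ∃ (height : P → ℝ) (c : P → Fin k → Pt), IsBlowUp height c := by
  obtain ⟨s, hs⟩ := exists_slopeHeight_injective P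
  let c (ε : ℝ) (p : P) (i : Fin k) : Pt := clusterPoint s ε p (i : ℕ)
  have hcast : StrictMono fun i : Fin k ↦ ((i : ℕ) : ℝ) := fun i j hij ↦ Nat.cast_lt.2 hij
  have hinj : ∀ᶠ ε in 𝓝[>] 0, ∀ (p q : P) (i j : Fin k), p ≠ q → c ε p i ≠ c ε q j := by
    simp only [eventually_all]
    exact fun p q i j hpq ↦ nhdsWithin_le_nhds
      (eventually_clusterPoint_ne s (Subtype.coe_ne_coe.2 hpq) _ _)
  have hdistinct : ∀ᶠ ε in 𝓝[>] 0, ∀ (p q r : P) (i j l : Fin k), p ≠ q → p ≠ r → q ≠ r →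
      sign (det2 (c ε p i) (c ε q j) (c ε r l)) = sign (det2 p q r) := by
    simp only [eventually_all]
    exact fun p q r i j l hpq hpr hqr ↦ nhdsWithin_le_nhds (eventually_sign_det2_clusterPoint s
      (hP.det2_ne_zero p.2 q.2 r.2 (Subtype.coe_ne_coe.2 hpq) (Subtype.coe_ne_coe.2 hpr)
        (Subtype.coe_ne_coe.2 hqr)) _ _ _)
  have hsame : ∀ᶠ ε in 𝓝[>] 0, ∀ (p q : P) (i j l : Fin k), p ≠ q → i < j →
      sign (det2 (c ε p i) (c ε p j) (c ε q l)) = sign (slopeHeight s q - slopeHeight s p) := by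
    simp only [eventually_all]
    exact fun p q i j l hpq hij ↦
      eventually_sign_det2_clusterPoint_same s (hs.ne hpq) (hcast hij) _
  obtain ⟨ε, hinj, hdistinct, hsame, hε⟩ :=
    (hinj.and (hdistinct.and (hsame.and self_mem_nhdsWithin))).exists
  have hε : ε ≠ 0 := ne_of_gt hε
  refine ⟨fun p ↦ slopeHeight s p, c ε, fun p q i j h ↦ ?_, hs, fun p ↦ ?_,
    fun {p q r} i j l ↦ hdistinct p q r i j l, fun {p q i j} l ↦ hsame p q i j l⟩
  · obtain rfl : p = q := by_contra fun hpq ↦ hinj p q i j hpq h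
    exact ⟨rfl, hcast.injective (clusterPoint_injective s hε p h)⟩
  · exact (genPos_range_clusterPoint s hε p).mono (range_subset_iff.2 fun i ↦ ⟨(i : ℕ), rfl⟩)

end Construction

theorem crossingFamily_grow_general {P : Finset Pt} (hP : GenPos ↑P) (hP_nonempty : P.Nonempty)
    {f : ℕ} (hf : 0 < f) (hmax : ∀ F : Finset (Sym2 Pt), IsCrossingFamily ↑P F → F.card ≤ f)
    (n : ℕ) :
    ∃ Q : Finset Pt, Q.card = n ∧ GenPos ↑Q ∧
      ∀ F : Finset (Sym2 Pt), IsCrossingFamily ↑Q F → F.card ≤ f * (n ⌈/⌉ P.card) := by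
  classical
  obtain ⟨height, c, hc⟩ := exists_isBlowUp hP (n ⌈/⌉ P.card)
  have hcard : n ≤ (Finset.univ.image (uncurry c)).card := by
    rw [Finset.card_image_of_injective _ hc.injective2.uncurry]
    simpa using le_smul_ceilDiv (b := n) hP_nonempty.card_pos
  obtain ⟨Q, hQ, hQn⟩ := Finset.exists_subset_card_eq hcard
  have hQ_range : (Q : Set Pt) ⊆ range (uncurry c) := by
    simpa using Finset.coe_subset.2 hQ
  refine ⟨Q, hQn, (hc.genPos hP).mono hQ_range, fun F hF ↦ ?_⟩
  simpa using hc.card_le_mul hP hf hmax (hF.mono hQ_range)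

theorem crossingFamily_grow
    (m f : ℕ) (hm : 0 < m) (hf : 1 < f)
    (h : ∃ P : Finset Pt, P.card = m ∧ GenPos ↑P ∧
      (∃ F : Finset (Sym2 Pt), IsCrossingFamily ↑P F ∧ F.card = f) ∧
      (∀ F : Finset (Sym2 Pt), IsCrossingFamily ↑P F → F.card ≤ f)) :
    ∀ n : ℕ, 0 < n → ∃ Q : Finset Pt, Q.card = n ∧ GenPos ↑Q ∧
      ∀ F : Finset (Sym2 Pt), IsCrossingFamily ↑Q F →
        F.card ≤ f * ((n + m - 1) / m) := by
  obtain ⟨P, rfl, hP, -, hmax⟩ := h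
  exact fun n _ ↦ crossingFamily_grow_general hP (Finset.card_pos.1 hm) (by omega) hmax n
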